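/- arXiv:2006.03069 — 6 statements merged into one kernel-verified Lean document; each statement's English description precedes it below -/
import Mathlib

section
/- Let 𝒜 : ℂ^{nd×d} → ℝ^m be a linear map with Hilbert–Schmidt adjoint 𝒜†, let X, X^l ∈ Ω̂^{n,d}_{s,r}, set G = 𝒜†(𝒜(X − X^l)), and let X^{l+1} be a minimizer over Z ∈ Ω̂^{n,d}_{s,r} of ‖Z − (X^l + G)‖_F. Let 𝒫 be any orthogonal projection (with respect to the Hilbert–Schmidt inner product) on ℂ^{nd×d} that fixes X, X^l, and X^{l+1}, i.e., 𝒫(X) = X, 𝒫(X^l) = X^l, 𝒫(X^{l+1}) = X^{l+1}. Then ‖X^{l+1} − X‖_F ≤ 2 ‖𝒫 ∘ (Id − 𝒜† ∘ 𝒜) ∘ 𝒫‖_∞ · ‖X^l − X‖_F, where ‖·‖_∞ denotes the operator norm. -/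
open scoped BigOperators ComplexOrder Matrix

/-- Frobenius norm of a complex matrix. -/
noncomputable def frob {α β : Type*} [Fintype α] [Fintype β]
    (X : Matrix α β ℂ) : ℝ := Real.sqrt (∑ i, ∑ j, ‖X i j‖ ^ 2)

/-- `ξ` has at most `s` non-vanishing entries. -/
def SparseVec {α : Type*} (s : ℕ) (ξ : α → ℝ) : Prop :=
  {i | ξ i ≠ 0}.ncard ≤ s

/-- Rank-`r` quantum states: positive semidefinite, unit trace, rank at most `r`. -/
def DensityR (d r : ℕ) (x : Matrix (Fin d) (Fin d) ℂ) : Prop :=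
  x.PosSemidef ∧ x.trace = 1 ∧ x.rank ≤ r

/-- The sparse de-mixing signal set `Ω̂^{n,d}_{s,r}`. -/
def OmegaHat (n d s r : ℕ) : Set (Matrix (Fin n × Fin d) (Fin d) ℂ) :=
  { X | ∃ ξ : Fin n → ℝ, ∃ x : Fin n → Matrix (Fin d) (Fin d) ℂ,
      SparseVec s ξ ∧ (∀ i, DensityR d r (x i)) ∧
      ∀ i j l, X (i, j) l = (ξ i : ℂ) * x i j l }

lemma frob_sq_eq {α β : Type*} [Fintype α] [Fintype β] (Y : Matrix α β ℂ) :
    frob Y ^ 2 = (Matrix.trace (Yᴴ * Y)).re := by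
  unfold frob
  rw [Real.sq_sqrt (by positivity), Finset.sum_comm]
  simp only [Matrix.trace, Matrix.diag, Matrix.mul_apply, Matrix.conjTranspose_apply,
    Complex.re_sum]
  refine Finset.sum_congr rfl fun i _ => Finset.sum_congr rfl fun j _ => ?_
  rw [← Complex.normSq_eq_norm_sq, Complex.normSq_apply]
  simp

lemma ip_symm {α β : Type*} [Fintype α] [Fintype β] (Y Z : Matrix α β ℂ) :
    (Matrix.trace (Yᴴ * Z)).re = (Matrix.trace (Zᴴ * Y)).re := by
  have : Matrix.trace (Yᴴ * Z) = star (Matrix.trace (Zᴴ * Y)) := by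
    rw [← Matrix.trace_conjTranspose]; simp
  rw [this]; simp

lemma frob_add_sq {α β : Type*} [Fintype α] [Fintype β] (Y Z : Matrix α β ℂ) :
    frob (Y + Z) ^ 2 = frob Y ^ 2 + 2 * (Matrix.trace (Yᴴ * Z)).re + frob Z ^ 2 := by
  simp only [frob_sq_eq, Matrix.conjTranspose_add, Matrix.add_mul, Matrix.mul_add,
    Matrix.trace_add, Complex.add_re]
  rw [ip_symm Z Y]; ring

/-- **One-step contraction estimate of the IHT iteration.**
Let `G = 𝒜†𝒜(X − X^l)` and let `X^{l+1}` be a best approximation in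
`Ω̂^{n,d}_{s,r}` to `X^l + G`. For any orthogonal projection `𝒫` (w.r.t. the
Hilbert–Schmidt inner product) fixing `X`, `X^l` and `X^{l+1}`,
`‖X^{l+1} − X‖_F ≤ 2 ‖𝒫 ∘ (Id − 𝒜†𝒜) ∘ 𝒫‖_∞ ‖X^l − X‖_F`.
The operator norm is encoded faithfully by quantifying over all upper bounds
`C` for the operator `𝒫 ∘ (Id − 𝒜†𝒜) ∘ 𝒫` (w.r.t. the Frobenius norm):
the stated inequality holds with the operator norm iff it holds for all such
`C`. -/
theorem IHT_one_step_contraction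
    (n d s r m : ℕ)
    (A : Matrix (Fin n × Fin d) (Fin d) ℂ →ₗ[ℝ] (Fin m → ℝ))
    (Aadj : (Fin m → ℝ) →ₗ[ℝ] Matrix (Fin n × Fin d) (Fin d) ℂ)
    -- `Aadj` is the adjoint of `A` w.r.t. the Hilbert–Schmidt inner product
    (hadj : ∀ (Y : Matrix (Fin n × Fin d) (Fin d) ℂ) (v : Fin m → ℝ),
      (∑ k, A Y k * v k) = (Matrix.trace ((Aadj v)ᴴ * Y)).re)
    (X Xl : Matrix (Fin n × Fin d) (Fin d) ℂ)
    (hX : X ∈ OmegaHat n d s r) (hXl : Xl ∈ OmegaHat n d s r)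
    (G : Matrix (Fin n × Fin d) (Fin d) ℂ)
    (hG : G = Aadj (A (X - Xl)))
    -- `X^{l+1}` minimizes `‖Z − (X^l + G)‖_F` over `Z ∈ Ω̂^{n,d}_{s,r}`
    (Xl1 : Matrix (Fin n × Fin d) (Fin d) ℂ)
    (hXl1mem : Xl1 ∈ OmegaHat n d s r)
    (hmin : ∀ Z ∈ OmegaHat n d s r,
      frob (Xl1 - (Xl + G)) ≤ frob (Z - (Xl + G)))
    -- `P` is an orthogonal projection w.r.t. the Hilbert–Schmidt inner product
    (P : Matrix (Fin n × Fin d) (Fin d) ℂ →ₗ[ℝ] Matrix (Fin n × Fin d) (Fin d) ℂ)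
    (hidem : ∀ Y, P (P Y) = P Y)
    (hsa : ∀ Y Z : Matrix (Fin n × Fin d) (Fin d) ℂ,
      (Matrix.trace ((P Y)ᴴ * Z)).re = (Matrix.trace (Yᴴ * P Z)).re)
    -- `P` fixes `X`, `X^l` and `X^{l+1}`
    (hPX : P X = X) (hPXl : P Xl = Xl) (hPXl1 : P Xl1 = Xl1)
    -- `C` is any bound on the operator norm of `𝒫 ∘ (Id − 𝒜†𝒜) ∘ 𝒫`
    (C : ℝ)
    (hC : ∀ Y : Matrix (Fin n × Fin d) (Fin d) ℂ,
      frob (P (P Y - Aadj (A (P Y)))) ≤ C * frob Y) :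
    frob (Xl1 - X) ≤ 2 * C * frob (Xl - X) := by
  have hfn : ∀ Y : Matrix (Fin n × Fin d) (Fin d) ℂ, 0 ≤ frob Y := fun Y => Real.sqrt_nonneg _
  have hm := hmin X hX
  have hPW : P (X - Xl) = X - Xl := by rw [map_sub, hPX, hPXl]
  have hPD : P (Xl1 - X) = Xl1 - X := by rw [map_sub, hPX, hPXl1]
  have hc := hC (X - Xl)
  rw [hPW, ← hG] at hc
  have e1 : Xl1 - (Xl + G) = (Xl1 - X) + (X - Xl - G) := by abel
  have e2 : X - (Xl + G) = X - Xl - G := by abel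
  have e3 : frob (X - Xl) = frob (Xl - X) := by
    unfold frob; simp only [Matrix.sub_apply, norm_sub_rev]
  rw [e1, e2] at hm
  rw [e3] at hc
  generalize X - Xl - G = e at *
  have h1 := pow_le_pow_left₀ (hfn _) hm 2
  rw [frob_add_sq] at h1
  have h2 := hsa (Xl1 - X) e
  rw [hPD] at h2
  rw [h2] at h1
  have h3 := frob_add_sq (Xl1 - X) (P e + P e)
  have h4 := frob_add_sq (P e) (P e)
  rw [← frob_sq_eq] at h4
  rw [Matrix.mul_add, Matrix.trace_add, Complex.add_re] at h3
  have h5 : frob (Xl1 - X) ≤ 2 * frob (P e) := by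
    refine (abs_le_of_sq_le_sq' ?_ (by linarith [hfn (P e)])).2
    nlinarith [sq_nonneg (frob (Xl1 - X + (P e + P e)))]
  linarith
end

section
/- Let X ∈ ℂ^{d×d} be Hermitian with eigenvalue decomposition X = U diag(λ) U†, where the eigenvalues λ_1 ≥ λ_2 ≥ … ≥ λ_d are ordered decreasingly. Define Y* = U diag(μ) U† where μ_i = max(λ_i, 0) for i ≤ r and μ_i = 0 for i > r. Then Y* minimizes ‖X − Y‖_F over all positive semidefinite matrices Y ∈ ℂ^{d×d} of rank at most r. -/
open scoped BigOperators ComplexOrder Matrix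

lemma frob_sq_eq_s10 {d : ℕ} (A : Matrix (Fin d) (Fin d) ℂ) :
    ((∑ i, ∑ j, ‖A i j‖ ^ 2 : ℝ) : ℂ) = (A * Aᴴ).trace := by
  simp only [Matrix.trace, Matrix.diag, Matrix.mul_apply, Matrix.conjTranspose_apply]
  push_cast
  refine Finset.sum_congr rfl fun i _ => Finset.sum_congr rfl fun j _ => ?_
  exact (Complex.mul_conj' (A i j)).symm

lemma frob_unitary {d : ℕ} (A U V : Matrix (Fin d) (Fin d) ℂ)
    (hU : Uᴴ * U = 1) (hV : V * Vᴴ = 1) : 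
    (∑ i, ∑ j, ‖(U * A * V) i j‖ ^ 2 : ℝ) = ∑ i, ∑ j, ‖A i j‖ ^ 2 := by
  have h : ((∑ i, ∑ j, ‖(U * A * V) i j‖ ^ 2 : ℝ) : ℂ) = ((∑ i, ∑ j, ‖A i j‖ ^ 2 : ℝ) : ℂ) := by
    rw [frob_sq_eq_s10, frob_sq_eq_s10]
    have : (U * A * V) * (U * A * V)ᴴ = U * (A * Aᴴ * Uᴴ) := by
      simp only [Matrix.conjTranspose_mul, Matrix.mul_assoc]
      rw [← Matrix.mul_assoc V, hV, Matrix.one_mul]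
    rw [this, Matrix.trace_mul_comm, Matrix.mul_assoc, hU, Matrix.mul_one]
  exact_mod_cast h

lemma unitary_row {d : ℕ} (W : Matrix (Fin d) (Fin d) ℂ) (h : W * Wᴴ = 1) (i : Fin d) :
    ∑ k, ‖W i k‖ ^ 2 = 1 := by
  have h1 := congrFun (congrFun h i) i
  rw [Matrix.mul_apply] at h1
  simp only [Matrix.conjTranspose_apply, Matrix.one_apply_eq] at h1
  have : ((∑ k, ‖W i k‖ ^ 2 : ℝ) : ℂ) = 1 := by
    rw [← h1]
    push_cast
    exact Finset.sum_congr rfl fun j _ => (Complex.mul_conj' (W i j)).symm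
  exact_mod_cast this

lemma unitary_col {d : ℕ} (W : Matrix (Fin d) (Fin d) ℂ) (h : Wᴴ * W = 1) (k : Fin d) :
    ∑ i, ‖W i k‖ ^ 2 = 1 := by
  have := unitary_row Wᴴ (by simpa using h) k
  simpa [Matrix.conjTranspose_apply] using this

lemma ky_fan_aux (d r : ℕ) (a p : Fin d → ℝ) (ha : ∀ i j, i ≤ j → a j ≤ a i)
    (ha0 : ∀ i, 0 ≤ a i) (hp0 : ∀ i, 0 ≤ p i) (hp1 : ∀ i, p i ≤ 1) (hps : ∑ i, p i ≤ r) :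
    ∑ i, p i * a i ≤ ∑ i : Fin d, if i.1 < r then a i else 0 := by
  by_cases hdr : d ≤ r
  · refine Finset.sum_le_sum fun i _ => ?_
    rw [if_pos (lt_of_lt_of_le i.2 hdr)]
    nlinarith [ha0 i, hp1 i]
  · push Not at hdr
    set t := a ⟨r, hdr⟩ with ht
    have ht0 : 0 ≤ t := ha0 _
    have hcard : ∑ i : Fin d, (if i.1 < r then (1 : ℝ) else 0) = r := by
      rw [Fin.sum_univ_eq_sum_range (fun i => if i < r then (1 : ℝ) else 0) d,
        ← Finset.sum_filter]
      have : (Finset.range d).filter (fun i => i < r) = Finset.range r := by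
        ext i; simp; omega
      rw [this]; simp
    have h1 : ∀ i : Fin d, p i * a i - (if i.1 < r then a i else 0) ≤
        t * (p i - if i.1 < r then (1 : ℝ) else 0) := by
      intro i
      split_ifs with h
      · have : t ≤ a i := ha _ _ (Fin.le_def.2 h.le)
        nlinarith [hp1 i]
      · have : a i ≤ t := ha _ _ (Fin.le_def.2 (not_lt.1 h))
        nlinarith [hp0 i]
    have h2 := Finset.sum_le_sum (s := Finset.univ) fun i _ => h1 i
    rw [Finset.sum_sub_distrib, ← Finset.mul_sum, Finset.sum_sub_distrib, hcard] at h2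
    nlinarith

lemma main_ineq (d r : ℕ) (lam e : Fin d → ℝ) (w : Fin d → Fin d → ℝ)
    (hdec : ∀ i j : Fin d, i ≤ j → lam j ≤ lam i) (he : ∀ k, 0 ≤ e k)
    (hw : ∀ i k, 0 ≤ w i k) (hrow : ∀ i, ∑ k, w i k = 1) (hcol : ∀ k, ∑ i, w i k = 1)
    (hr : ∑ k, (if e k = 0 then (0 : ℝ) else 1) ≤ r) :
    ∑ i : Fin d, (lam i - (if i.1 < r then max (lam i) 0 else 0)) ^ 2
      ≤ ∑ i, ∑ k, w i k * (lam i - e k) ^ 2 := by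
  set s : Fin d → ℝ := fun k => if e k = 0 then (0 : ℝ) else 1 with hs
  have hs0 : ∀ k, 0 ≤ s k := fun k => by simp only [hs]; split_ifs <;> norm_num
  have hs1 : ∀ k, s k ≤ 1 := fun k => by simp only [hs]; split_ifs <;> norm_num
  have hk := ky_fan_aux d r (fun i => (max (lam i) 0) ^ 2) (fun i => ∑ k, w i k * s k)
    (fun i j h => by
      have := hdec i j h
      gcongr)
    (fun i => sq_nonneg _) (fun i => Finset.sum_nonneg fun k _ => mul_nonneg (hw i k) (hs0 k))
    (fun i => by
      rw [← hrow i]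
      exact Finset.sum_le_sum fun k _ => mul_le_of_le_one_right (hw i k) (hs1 k))
    (by
      rw [Finset.sum_comm]
      simp only [← Finset.sum_mul, hcol, one_mul]
      exact hr)
  have h1 : ∀ i : Fin d, lam i ^ 2 - (∑ k, w i k * s k) * (max (lam i) 0) ^ 2
      ≤ ∑ k, w i k * (lam i - e k) ^ 2 := by
    intro i
    have : lam i ^ 2 - (∑ k, w i k * s k) * (max (lam i) 0) ^ 2
        = ∑ k, w i k * (lam i ^ 2 - s k * (max (lam i) 0) ^ 2) := by
      simp only [mul_sub, Finset.sum_sub_distrib, ← Finset.sum_mul, ← mul_assoc, hrow, one_mul]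
    rw [this]
    refine Finset.sum_le_sum fun k _ => mul_le_mul_of_nonneg_left ?_ (hw i k)
    simp only [hs]
    split_ifs with h
    · simp [h]
    · rcases le_total (lam i) 0 with hl | hl
      · rw [max_eq_right hl]; nlinarith [he k]
      · rw [max_eq_left hl]; nlinarith [sq_nonneg (lam i - e k)]
  have h2 := Finset.sum_le_sum (s := Finset.univ) fun i _ => h1 i
  refine le_trans ?_ h2
  have h3 : ∀ i : Fin d, (lam i - (if i.1 < r then max (lam i) 0 else 0)) ^ 2
      = lam i ^ 2 - (if i.1 < r then (max (lam i) 0) ^ 2 else 0) := by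
    intro i
    split_ifs
    · rcases le_total (lam i) 0 with hl | hl
      · rw [max_eq_right hl]; ring
      · rw [max_eq_left hl]; ring
    · ring
  rw [Finset.sum_congr rfl fun i _ => h3 i, Finset.sum_sub_distrib, Finset.sum_sub_distrib]
  linarith

/-- **Correctness of eigenvalue hard thresholding.**
Let `X = U diag(λ) Uᴴ` be Hermitian with decreasingly ordered eigenvalues and
unitary `U`. Then `Y* = U diag(μ) Uᴴ` with `μ i = max(λ i, 0)` for the first
`r` indices and `μ i = 0` otherwise minimizes `‖X − Y‖_F` over all positive
semidefinite `Y ∈ ℂ^{d×d}` of rank at most `r`. -/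
theorem psd_low_rank_projection
    (d r : ℕ) (X U : Matrix (Fin d) (Fin d) ℂ) (lam : Fin d → ℝ)
    (hU : U ∈ Matrix.unitaryGroup (Fin d) ℂ)
    (hdec : ∀ i j : Fin d, i ≤ j → lam j ≤ lam i)
    (hX : X = U * Matrix.diagonal (fun i => (lam i : ℂ)) * Uᴴ)
    (Ystar : Matrix (Fin d) (Fin d) ℂ)
    (hYstar : Ystar = U * Matrix.diagonal
        (fun i : Fin d => ((if i.1 < r then max (lam i) 0 else 0 : ℝ) : ℂ)) * Uᴴ) :
    ∀ Y : Matrix (Fin d) (Fin d) ℂ, Y.PosSemidef → Y.rank ≤ r →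
      frob (X - Ystar) ≤ frob (X - Y) := by
  intro Y hY hrank
  have hU1 : Uᴴ * U = 1 := Matrix.mem_unitaryGroup_iff'.1 hU
  have hU2 : U * Uᴴ = 1 := Matrix.mem_unitaryGroup_iff.1 hU
  obtain ⟨V, e, hV1, hV2, hYe, he, hr⟩ : ∃ (V : Matrix (Fin d) (Fin d) ℂ) (e : Fin d → ℝ),
      Vᴴ * V = 1 ∧ V * Vᴴ = 1 ∧ Y = V * Matrix.diagonal (fun k => (e k : ℂ)) * Vᴴ ∧
      (∀ k, 0 ≤ e k) ∧ ∑ k, (if e k = 0 then (0 : ℝ) else 1) ≤ r := by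
    refine ⟨hY.1.eigenvectorUnitary, hY.1.eigenvalues,
      Matrix.mem_unitaryGroup_iff'.1 hY.1.eigenvectorUnitary.2,
      Matrix.mem_unitaryGroup_iff.1 hY.1.eigenvectorUnitary.2, hY.1.spectral_theorem,
      hY.eigenvalues_nonneg, ?_⟩
    have h := hY.1.rank_eq_card_non_zero_eigs
    rw [h, Fintype.card_subtype] at hrank
    have : ∑ k, (if hY.1.eigenvalues k = 0 then (0 : ℝ) else 1)
        = ((Finset.univ.filter fun k => hY.1.eigenvalues k ≠ 0).card : ℝ) := by
      rw [Finset.card_filter]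
      push_cast
      refine Finset.sum_congr rfl fun k _ => ?_
      by_cases hk : hY.1.eigenvalues k = 0 <;> simp [hk]
    rw [this]
    exact_mod_cast hrank
  unfold frob
  apply Real.sqrt_le_sqrt
  set W := Uᴴ * V with hW
  have hW1 : Wᴴ * W = 1 := by
    simp only [hW, Matrix.conjTranspose_mul, Matrix.conjTranspose_conjTranspose, Matrix.mul_assoc]
    rw [← Matrix.mul_assoc U, hU2, Matrix.one_mul, hV1]
  have hW2 : W * Wᴴ = 1 := by
    simp only [hW, Matrix.conjTranspose_mul, Matrix.conjTranspose_conjTranspose, Matrix.mul_assoc]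
    rw [← Matrix.mul_assoc V, hV2, Matrix.one_mul, hU1]
  have key := main_ineq d r lam e (fun i k => ‖W i k‖ ^ 2) hdec he (fun i k => sq_nonneg _)
    (unitary_row W hW2) (unitary_col W hW1) hr
  have hl : X - Ystar = U * Matrix.diagonal (fun i : Fin d =>
      ((lam i - (if i.1 < r then max (lam i) 0 else 0) : ℝ) : ℂ)) * Uᴴ := by
    rw [hX, hYstar, ← Matrix.sub_mul, ← Matrix.mul_sub, Matrix.diagonal_sub]
    simp only [Complex.ofReal_sub]
  have hr' : X - Y = U * (Matrix.diagonal (fun i => (lam i : ℂ)) * W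
      - W * Matrix.diagonal (fun k => (e k : ℂ))) * Vᴴ := by
    rw [hX, hYe, Matrix.mul_sub, Matrix.sub_mul]
    simp only [hW, Matrix.mul_assoc]
    rw [hV2, Matrix.mul_one, ← Matrix.mul_assoc U Uᴴ, hU2, Matrix.one_mul]
  rw [hl, hr', frob_unitary _ _ _ hU1 (by simpa using hU1),
    frob_unitary _ _ _ hU1 (by simpa using hV1)]
  refine le_trans (le_of_eq ?_) (key.trans (le_of_eq ?_))
  · refine Finset.sum_congr rfl fun i _ => ?_
    rw [Finset.sum_eq_single i]
    · rw [Matrix.diagonal_apply_eq, Complex.norm_real, Real.norm_eq_abs, sq_abs]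
    · intro j _ hj
      rw [Matrix.diagonal_apply_ne' _ hj]; simp
    · simp
  · refine Finset.sum_congr rfl fun i _ => Finset.sum_congr rfl fun k _ => ?_
    rw [Matrix.sub_apply, Matrix.diagonal_mul, Matrix.mul_diagonal]
    have : (lam i : ℂ) * W i k - W i k * (e k : ℂ) = W i k * ((lam i - e k : ℝ) : ℂ) := by
      push_cast; ring
    rw [this, norm_mul, Complex.norm_real, Real.norm_eq_abs, mul_pow, sq_abs]
end

section
/- Let X ∈ ℂ^{nd×d} consist of n stacked Hermitian d×d blocks x_1, …, x_n. For each k, let p_k be a Frobenius-nearest point to x_k in the closed cone of positive semidefinite d×d matrices of rank at most r, and let W ⊆ [n] be a set of s indices such that ‖p_k‖_F ≥ ‖p_j‖_F for all k ∈ W and j ∉ W. Then the block matrix Y with blocks Y_k = p_k for k ∈ W and Y_k = 0 otherwise is a Frobenius-nearest point to X in the set of nd×d block matrices that have at most s nonzero d×d blocks, each of which is positive semidefinite of rank at most r. -/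
open scoped BigOperators ComplexOrder Matrix

/-- The `k`-th `d×d` block of a matrix in `ℂ^{nd×d}`. -/
def blk {n d : ℕ} (X : Matrix (Fin n × Fin d) (Fin d) ℂ) (k : Fin n) :
    Matrix (Fin d) (Fin d) ℂ := Matrix.of fun j l => X (k, j) l

/-- The closed cone of positive semidefinite `d×d` matrices of rank at most `r`. -/
def PSDr (d r : ℕ) : Set (Matrix (Fin d) (Fin d) ℂ) :=
  {p | p.PosSemidef ∧ p.rank ≤ r}

/-- Block matrices in `ℂ^{nd×d}` with at most `s` nonzero `d×d` blocks, each
positive semidefinite of rank at most `r`. -/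
def BlockSparsePSDr (n d s r : ℕ) : Set (Matrix (Fin n × Fin d) (Fin d) ℂ) :=
  {Z | {k | blk Z k ≠ 0}.ncard ≤ s ∧ ∀ k, blk Z k ∈ PSDr d r}

noncomputable def qf {α β : Type*} [Fintype α] [Fintype β]
    (X : Matrix α β ℂ) : ℝ := ∑ i, ∑ j, ‖X i j‖ ^ 2

lemma qf_nonneg {α β : Type*} [Fintype α] [Fintype β] (X : Matrix α β ℂ) : 0 ≤ qf X := by
  unfold qf; positivity

lemma frob_le_iff {α β γ δ : Type*} [Fintype α] [Fintype β] [Fintype γ] [Fintype δ]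
    (X : Matrix α β ℂ) (Y : Matrix γ δ ℂ) : frob X ≤ frob Y ↔ qf X ≤ qf Y :=
  Real.sqrt_le_sqrt_iff (qf_nonneg Y)

lemma qf_expand {α β : Type*} [Fintype α] [Fintype β] (x p : Matrix α β ℂ) (t : ℝ) :
    qf (x - (t : ℂ) • p) = qf x - 2 * t * (∑ i, ∑ j, ((x i j).re * (p i j).re +
      (x i j).im * (p i j).im)) + t ^ 2 * qf p := by
  unfold qf
  simp only [Finset.mul_sum, ← Finset.sum_sub_distrib, ← Finset.sum_add_distrib]
  refine Finset.sum_congr rfl fun i _ => Finset.sum_congr rfl fun j _ => ?_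
  simp only [Complex.sq_norm, Complex.normSq_apply, Matrix.sub_apply, Matrix.smul_apply,
    smul_eq_mul, Complex.sub_re, Complex.sub_im, Complex.mul_re, Complex.mul_im,
    Complex.ofReal_re, Complex.ofReal_im]
  ring

lemma smul_mem_PSDr {d r : ℕ} {p : Matrix (Fin d) (Fin d) ℂ} (hp : p ∈ PSDr d r) {t : ℝ}
    (ht : 0 ≤ t) : (t : ℂ) • p ∈ PSDr d r := by
  refine ⟨hp.1.smul (by exact_mod_cast ht), le_trans ?_ hp.2⟩
  have := Matrix.rank_mul_le_right ((t : ℂ) • (1 : Matrix (Fin d) (Fin d) ℂ)) p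
  simpa using this

lemma pythag {d r : ℕ} {x p : Matrix (Fin d) (Fin d) ℂ} (hp : p ∈ PSDr d r)
    (hmin : ∀ q ∈ PSDr d r, frob (x - p) ≤ frob (x - q)) : qf (x - p) = qf x - qf p := by
  have key : ∀ t : ℝ, 0 ≤ t → qf (x - p) ≤ qf (x - (t : ℂ) • p) := fun t ht =>
    (frob_le_iff _ _).1 (hmin _ (smul_mem_PSDr hp ht))
  have h1 := qf_expand x p 1
  simp only [Complex.ofReal_one, one_smul] at h1
  simp only [qf_expand] at key
  rw [h1] at key ⊢
  generalize (∑ i, ∑ j, ((x i j).re * (p i j).re + (x i j).im * (p i j).im)) = B at *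
  have hA := qf_nonneg p
  generalize qf p = A at *
  have h0 := key 0 le_rfl
  rcases hA.eq_or_lt with h | h
  · have h2 := key 2 (by norm_num)
    subst h
    linarith
  · have h2 := key (B / A) (div_nonneg (by linarith) h.le)
    have e : qf x - 2 * (B / A) * B + (B / A) ^ 2 * A = qf x - B ^ 2 / A := by
      field_simp; ring
    rw [e] at h2
    have h3 : B ^ 2 / A ≤ 2 * B - A := by linarith
    rw [div_le_iff₀ h] at h3
    have : (B - A) ^ 2 = 0 := le_antisymm (by nlinarith) (sq_nonneg _)
    have : B - A = 0 := by simpa using this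
    linarith

lemma top_sum {ι : Type*} [DecidableEq ι] (f : ι → ℝ) (hf : ∀ i, 0 ≤ f i) (S W : Finset ι)
    (hc : S.card ≤ W.card) (h : ∀ k ∈ W, ∀ j ∉ W, f j ≤ f k) :
    ∑ i ∈ S, f i ≤ ∑ i ∈ W, f i := by
  rw [← Finset.sum_sdiff_le_sum_sdiff]
  have hc' : (S \ W).card ≤ (W \ S).card := by
    have h1 := Finset.card_sdiff_add_card_inter S W
    have h2 := Finset.card_sdiff_add_card_inter W S
    rw [Finset.inter_comm] at h2
    omega
  rcases (W \ S).eq_empty_or_nonempty with he | hne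
  · have : S \ W = ∅ := by
      rw [he] at hc'; simpa using hc'
    rw [he, this]
  · obtain ⟨m, hm, hmin⟩ := Finset.exists_min_image _ f hne
    calc ∑ i ∈ S \ W, f i ≤ (S \ W).card • f m :=
          Finset.sum_le_card_nsmul _ _ _ fun i hi =>
            h m (Finset.mem_sdiff.1 hm).1 i (Finset.mem_sdiff.1 hi).2
      _ ≤ (W \ S).card • f m := nsmul_le_nsmul_left (hf m) hc'
      _ ≤ ∑ i ∈ W \ S, f i := Finset.card_nsmul_le_sum _ _ _ hmin

lemma qf_blk {n d : ℕ} (X Y : Matrix (Fin n × Fin d) (Fin d) ℂ) :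
    qf (X - Y) = ∑ k, qf (blk X k - blk Y k) := by
  unfold qf
  rw [Fintype.sum_prod_type]
  rfl

/-- **Correctness of hierarchical thresholding (Algorithm 1).**
Let `X` have Hermitian blocks `x₁, …, xₙ`, let `p k` be a Frobenius-nearest
point to `x k` in the PSD rank-`≤ r` cone, and let `W` be a set of `s` indices
carrying the blocks with largest `‖p k‖_F`. Then the block matrix `Y` with
`Y_k = p k` for `k ∈ W` and `Y_k = 0` otherwise is a Frobenius-nearest point
to `X` in the set of block matrices with at most `s` nonzero PSD rank-`≤ r`
blocks. -/
theorem hierarchical_thresholding_is_projection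
    (n d s r : ℕ)
    (X : Matrix (Fin n × Fin d) (Fin d) ℂ)
    (hX : ∀ k, (blk X k).IsHermitian)
    (p : Fin n → Matrix (Fin d) (Fin d) ℂ)
    (hpmem : ∀ k, p k ∈ PSDr d r)
    (hpmin : ∀ k, ∀ q ∈ PSDr d r, frob (blk X k - p k) ≤ frob (blk X k - q))
    (W : Finset (Fin n)) (hW : W.card = s)
    (hWmax : ∀ k ∈ W, ∀ j ∉ W, frob (p j) ≤ frob (p k))
    (Y : Matrix (Fin n × Fin d) (Fin d) ℂ)
    (hY : ∀ k, blk Y k = if k ∈ W then p k else 0) :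
    Y ∈ BlockSparsePSDr n d s r ∧
      ∀ Z ∈ BlockSparsePSDr n d s r, frob (X - Y) ≤ frob (X - Z) := by
  classical
  have z0 : (0 : Matrix (Fin d) (Fin d) ℂ) ∈ PSDr d r := ⟨Matrix.PosSemidef.zero, by simp⟩
  have hpy := fun k => pythag (hpmem k) (hpmin k)
  refine ⟨⟨?_, fun k => ?_⟩, fun Z hZ => ?_⟩
  · rw [← hW, ← Set.ncard_coe_finset]
    refine Set.ncard_le_ncard (fun k hk => ?_) (Finset.finite_toSet W)
    by_contra hkW
    exact hk (by rw [hY, if_neg (by simpa using hkW)])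
  · rw [hY]
    split_ifs
    exacts [hpmem k, z0]
  · rw [frob_le_iff, qf_blk, qf_blk]
    set S : Finset (Fin n) := Finset.univ.filter fun k => blk Z k ≠ 0 with hS
    have hSc : S.card ≤ W.card := by
      rw [hW, ← Set.ncard_coe_finset]
      simpa [hS] using hZ.1
    have hsum := top_sum (fun k => qf (p k)) (fun k => qf_nonneg _) S W hSc
      fun k hk j hj => (frob_le_iff _ _).1 (hWmax k hk j hj)
    have hl : ∑ k, qf (blk X k - blk Y k) = ∑ k, qf (blk X k) - ∑ k ∈ W, qf (p k) := by
      rw [show ∑ k ∈ W, qf (p k) = ∑ k, if k ∈ W then qf (p k) else 0 by simp, ← Finset.sum_sub_distrib]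
      refine Finset.sum_congr rfl fun k _ => ?_
      rw [hY]
      split_ifs
      · exact hpy k
      · simp
    have hr : ∑ k, qf (blk X k) - ∑ k ∈ S, qf (p k) ≤ ∑ k, qf (blk X k - blk Z k) := by
      rw [show ∑ k ∈ S, qf (p k) = ∑ k, if k ∈ S then qf (p k) else 0 by rw [Finset.sum_ite_mem, Finset.univ_inter], ← Finset.sum_sub_distrib]
      refine Finset.sum_le_sum fun k _ => ?_
      split_ifs with hk
      · rw [← hpy k]
        exact (frob_le_iff _ _).1 (hpmin k _ (hZ.2 k))
      · have : blk Z k = 0 := by simpa [hS] using hk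
        simp [this]
    linarith
end

section
/- Let A ∈ ℝ^{d×n}. Then the infimum over v ∈ ℝ^d and s-sparse w ∈ Σ^n_s of ‖A − v wᵀ‖_F² equals ‖A‖_F² − max{ ‖A w‖_{ℓ2}² : w ∈ Σ^n_s, ‖w‖_{ℓ2} = 1 }. -/
open scoped BigOperators Matrix

/-- Frobenius norm of a real matrix. -/
noncomputable def frobR {α β : Type*} [Fintype α] [Fintype β]
    (X : Matrix α β ℝ) : ℝ := Real.sqrt (∑ i, ∑ j, (X i j) ^ 2)

/-- ℓ₂-norm of a real vector. -/
noncomputable def l2 {α : Type*} [Fintype α] (y : α → ℝ) : ℝ :=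
  Real.sqrt (∑ k, (y k) ^ 2)

lemma frobR_sq_aux {α β : Type*} [Fintype α] [Fintype β] (X : Matrix α β ℝ) :
    frobR X ^ 2 = ∑ i, ∑ j, (X i j) ^ 2 :=
  Real.sq_sqrt (Finset.sum_nonneg fun _ _ => Finset.sum_nonneg fun _ _ => sq_nonneg _)

lemma l2_sq_aux {α : Type*} [Fintype α] (y : α → ℝ) : l2 y ^ 2 = ∑ k, (y k) ^ 2 :=
  Real.sq_sqrt (Finset.sum_nonneg fun _ _ => sq_nonneg _)

lemma frobR_expand_aux {d n : ℕ} (A : Matrix (Fin d) (Fin n) ℝ) (v : Fin d → ℝ)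
    (w : Fin n → ℝ) :
    frobR (A - Matrix.vecMulVec v w) ^ 2 =
      frobR A ^ 2 + ∑ i, ((v i) ^ 2 * l2 w ^ 2 - 2 * v i * (A.mulVec w) i) := by
  rw [frobR_sq_aux, frobR_sq_aux, l2_sq_aux, ← Finset.sum_add_distrib]
  refine Finset.sum_congr rfl fun i _ => ?_
  simp only [Matrix.mulVec, dotProduct, Finset.mul_sum]
  rw [← Finset.sum_sub_distrib, ← Finset.sum_add_distrib]
  refine Finset.sum_congr rfl fun j _ => ?_
  simp only [Matrix.sub_apply, Matrix.vecMulVec_apply]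
  ring

/-- **Variational identity for rank-one approximation with one sparse factor.**
For `A ∈ ℝ^{d×n}`,
`inf { ‖A − v wᵀ‖_F² : v ∈ ℝ^d, w ∈ Σ^n_s }
  = ‖A‖_F² − max { ‖A w‖_{ℓ₂}² : w ∈ Σ^n_s, ‖w‖_{ℓ₂} = 1 }`. -/
theorem rank_one_sparse_approximation_identity
    (d n s : ℕ) (A : Matrix (Fin d) (Fin n) ℝ) :
    sInf {t : ℝ | ∃ v : Fin d → ℝ, ∃ w : Fin n → ℝ, SparseVec s w ∧
        t = frobR (A - Matrix.vecMulVec v w) ^ 2} =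
      frobR A ^ 2 -
        sSup {t : ℝ | ∃ w : Fin n → ℝ, SparseVec s w ∧ l2 w = 1 ∧
          t = l2 (A.mulVec w) ^ 2} := by
  set T := {t : ℝ | ∃ v : Fin d → ℝ, ∃ w : Fin n → ℝ, SparseVec s w ∧
        t = frobR (A - Matrix.vecMulVec v w) ^ 2} with hT
  set S := {t : ℝ | ∃ w : Fin n → ℝ, SparseVec s w ∧ l2 w = 1 ∧
          t = l2 (A.mulVec w) ^ 2} with hS
  have hT0 : frobR A ^ 2 ∈ T := by
    refine ⟨0, 0, by simp [SparseVec], by simp⟩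
  have hTb : BddBelow T := ⟨0, by rintro t ⟨v, w, _, rfl⟩; positivity⟩
  have hST : ∀ t ∈ S, frobR A ^ 2 - t ∈ T := by
    rintro t ⟨w, hw, hw1, rfl⟩
    refine ⟨A.mulVec w, w, hw, ?_⟩
    rw [frobR_expand_aux, hw1, l2_sq_aux, sub_eq_add_neg, ← Finset.sum_neg_distrib]
    congr 1
    refine Finset.sum_congr rfl fun i _ => ?_
    ring
  have hSle : ∀ t ∈ S, t ≤ frobR A ^ 2 - sInf T := fun t ht => by
    have := csInf_le hTb (hST t ht)
    linarith
  have hSb : BddAbove S := ⟨_, hSle⟩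
  have hS0 : 0 ≤ sSup S := Real.sSup_nonneg (by rintro t ⟨w, _, _, rfl⟩; positivity)
  apply le_antisymm
  · have : sSup S ≤ frobR A ^ 2 - sInf T := by
      rcases S.eq_empty_or_nonempty with h | h
      · rw [h, Real.sSup_empty]
        have := csInf_le hTb hT0
        linarith
      · exact csSup_le h hSle
    linarith
  · refine le_csInf ⟨_, hT0⟩ ?_
    rintro t ⟨v, w, hw, rfl⟩
    rw [frobR_expand_aux]
    have hl0 : 0 ≤ l2 w := Real.sqrt_nonneg _
    rcases hl0.eq_or_lt with h0 | hpos
    · have hw0 : w = 0 := by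
        have h2 := l2_sq_aux w
        rw [← h0] at h2
        funext k
        have h3 := (Finset.sum_eq_zero_iff_of_nonneg (fun k _ => sq_nonneg (w k))).1
          (by rw [← h2]; norm_num) k (Finset.mem_univ k)
        simpa using h3
      rw [← h0, hw0]
      simp [hS0]
    · have hmem : l2 (A.mulVec ((l2 w)⁻¹ • w)) ^ 2 ∈ S := by
        refine ⟨_, ?_, ?_, rfl⟩
        · unfold SparseVec at *
          simpa [hpos.ne'] using hw
        · have h1 : l2 ((l2 w)⁻¹ • w) ^ 2 = 1 := by
            rw [l2_sq_aux]
            simp only [Pi.smul_apply, smul_eq_mul, mul_pow]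
            rw [← Finset.mul_sum, ← l2_sq_aux]
            field_simp
          have h2 : 0 ≤ l2 ((l2 w)⁻¹ • w) := Real.sqrt_nonneg _
          nlinarith
      have hle := le_csSup hSb hmem
      have key : -l2 (A.mulVec ((l2 w)⁻¹ • w)) ^ 2 ≤
          ∑ i, ((v i) ^ 2 * l2 w ^ 2 - 2 * v i * (A.mulVec w) i) := by
        rw [l2_sq_aux, ← Finset.sum_neg_distrib]
        refine Finset.sum_le_sum fun i _ => ?_
        rw [Matrix.mulVec_smul, Pi.smul_apply, smul_eq_mul]
        have h3 : (l2 w)⁻¹ * l2 w = 1 := inv_mul_cancel₀ hpos.ne'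
        have h4 : v i ^ 2 * l2 w ^ 2 - 2 * v i * (A.mulVec w) i
            + ((l2 w)⁻¹ * (A.mulVec w) i) ^ 2
            = (v i * l2 w - (l2 w)⁻¹ * (A.mulVec w) i) ^ 2 := by
          linear_combination 2 * v i * (A.mulVec w) i * h3
        have := sq_nonneg (v i * l2 w - (l2 w)⁻¹ * (A.mulVec w) i)
        linarith
      linarith
end

section
/- Let A' ∈ ℝ^{σ×n} with σ ≤ d, and let A ∈ ℝ^{d×n} be obtained by stacking a (d−σ)×n zero matrix on top of A'. Then min over v ∈ Σ^d_σ and w ∈ Σ^n_s of ‖A − v wᵀ‖_F equals min over v' ∈ ℝ^σ and w ∈ Σ^n_s of ‖A' − v' wᵀ‖_F. -/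
open scoped BigOperators Matrix

/-- **Reduction from two sparse factors to one sparse factor.**
Let `A' ∈ ℝ^{σ×n}` and let `A ∈ ℝ^{d×n}` (with `d = k + σ`, rows indexed by
`Fin k ⊕ Fin σ`) be obtained by stacking a `(d−σ)×n` zero matrix on top of
`A'`. Then the minimum of `‖A − v wᵀ‖_F` over `σ`-sparse `v ∈ ℝ^d` and
`s`-sparse `w ∈ ℝⁿ` equals the minimum of `‖A' − v' wᵀ‖_F` over arbitrary
`v' ∈ ℝ^σ` and `s`-sparse `w ∈ ℝⁿ`. -/
theorem sparse_factor_reduction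
    (k σ n s : ℕ) (A' : Matrix (Fin σ) (Fin n) ℝ)
    (A : Matrix (Fin k ⊕ Fin σ) (Fin n) ℝ)
    (hzero : ∀ (i : Fin k) (j : Fin n), A (Sum.inl i) j = 0)
    (hA' : ∀ (i : Fin σ) (j : Fin n), A (Sum.inr i) j = A' i j) :
    sInf {t : ℝ | ∃ v : (Fin k ⊕ Fin σ) → ℝ, ∃ w : Fin n → ℝ,
        SparseVec σ v ∧ SparseVec s w ∧
        t = frobR (A - Matrix.vecMulVec v w)} =
    sInf {t : ℝ | ∃ v' : Fin σ → ℝ, ∃ w : Fin n → ℝ, SparseVec s w ∧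
        t = frobR (A' - Matrix.vecMulVec v' w)} := by
  apply le_antisymm
  · apply le_csInf
    · exact ⟨_, 0, 0, by simp [SparseVec], rfl⟩
    · rintro t ⟨v', w, hw, rfl⟩
      apply csInf_le
      · refine ⟨0, ?_⟩
        rintro t ⟨_, _, _, _, rfl⟩
        exact Real.sqrt_nonneg _
      · refine ⟨Sum.elim 0 v', w, ?_, hw, ?_⟩
        · unfold SparseVec
          have hsub : {i | Sum.elim (0 : Fin k → ℝ) v' i ≠ 0} ⊆ Set.range Sum.inr := by
            rintro (i | i) hi
            · simp at hi
            · exact ⟨i, rfl⟩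
          refine (Set.ncard_le_ncard hsub (Set.toFinite _)).trans ?_
          rw [← Set.image_univ]
          refine (Set.ncard_image_le (Set.toFinite _)).trans ?_
          simp [Set.ncard_univ]
        · unfold frobR
          simp [Fintype.sum_sum_type, Matrix.vecMulVec_apply, hzero, hA']
  · apply le_csInf
    · exact ⟨_, 0, 0, by simp [SparseVec], by simp [SparseVec], rfl⟩
    · rintro t ⟨v, w, hv, hw, rfl⟩
      refine le_trans (csInf_le ?_ ⟨fun i => v (Sum.inr i), w, hw, rfl⟩) ?_
      · refine ⟨0, ?_⟩
        rintro t ⟨_, _, _, rfl⟩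
        exact Real.sqrt_nonneg _
      · unfold frobR
        apply Real.sqrt_le_sqrt
        rw [Fintype.sum_sum_type]
        simp only [Matrix.sub_apply, Matrix.vecMulVec_apply, hA']
        exact le_add_of_nonneg_left
          (Finset.sum_nonneg fun i _ => Finset.sum_nonneg fun j _ => sq_nonneg _)
end

section
/- Let A' ∈ ℝ^{n×d} with rows A'_1, …, A'_n, and let A = Σ_{i=1}^n e_i ⊗ diag(A'_i) ∈ ℝ^{nd×d} be the block matrix whose i-th d×d block is the diagonal matrix with the i-th row of A' on its diagonal. Then the minimum over ξ ∈ Σ^n_s and Hermitian ρ ∈ ℂ^{d×d} of rank at most r of ‖A − ξ ⊗ ρ‖_F² equals the minimum over ξ ∈ Σ^n_s and λ ∈ Σ^d_r of ‖A' − ξ λᵀ‖_F². -/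
open scoped BigOperators ComplexOrder Matrix

/-- The block matrix `A = ∑ᵢ eᵢ ⊗ diag(A'ᵢ) ∈ ℂ^{nd×d}` whose `i`-th `d×d`
block is the diagonal matrix with the `i`-th row of `A'` on its diagonal. -/
def diagBlocks {n d : ℕ} (A' : Matrix (Fin n) (Fin d) ℝ) :
    Matrix (Fin n × Fin d) (Fin d) ℂ :=
  Matrix.of fun p l => if p.2 = l then (A' p.1 p.2 : ℂ) else 0

/-- The block matrix `ξ ⊗ ρ ∈ ℂ^{nd×d}` whose `i`-th `d×d` block is `ξ i • ρ`. -/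
def tensorBlock {n d : ℕ} (ξ : Fin n → ℝ) (ρ : Matrix (Fin d) (Fin d) ℂ) :
    Matrix (Fin n × Fin d) (Fin d) ℂ :=
  Matrix.of fun p l => (ξ p.1 : ℂ) * ρ p.2 l

open Finset in
lemma topsum {d : ℕ} (r : ℕ) (c p : Fin d → ℝ) (hc : ∀ j, 0 ≤ c j) (hp0 : ∀ j, 0 ≤ p j)
    (hp1 : ∀ j, p j ≤ 1) (hps : ∑ j, p j ≤ r) :
    ∃ S : Finset (Fin d), S.card ≤ r ∧ ∑ j, p j * c j ≤ ∑ j ∈ S, c j := by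
  by_cases hr : d ≤ r
  · refine ⟨univ, by simpa using hr, ?_⟩
    exact sum_le_sum fun j _ => by nlinarith [hc j, hp1 j]
  push Not at hr
  obtain ⟨S, hS, hmax⟩ := exists_max_image (powersetCard r (univ : Finset (Fin d)))
    (fun S => ∑ j ∈ S, c j) (powersetCard_nonempty.2 (by simpa using hr.le))
  have hcard := (mem_powersetCard.1 hS).2
  refine ⟨S, hcard.le, ?_⟩
  have hex : ∀ i ∈ S, ∀ j ∉ S, c j ≤ c i := by
    intro i hi j hj
    have hj' : j ∉ S.erase i := fun h => hj (mem_of_mem_erase h)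
    have h1 := hmax (insert j (S.erase i)) (by
      rw [mem_powersetCard]
      refine ⟨subset_univ _, ?_⟩
      rw [card_insert_of_notMem hj', card_erase_of_mem hi, hcard]
      have := card_pos.2 ⟨i, hi⟩
      omega)
    simp only [sum_insert hj'] at h1
    have := add_sum_erase S c hi
    linarith
  have hne : (Sᶜ : Finset (Fin d)).Nonempty := by
    rw [← card_pos, card_compl]; simp; omega
  obtain ⟨m, hm, hmm⟩ := exists_max_image Sᶜ c hne
  have key : ∀ j, p j * c j - (if j ∈ S then c j else 0) ≤
      c m * (p j - (if j ∈ S then 1 else 0)) := by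
    intro j
    split_ifs with h
    · nlinarith [hex j h m (by simpa using hm), hp1 j]
    · nlinarith [hmm j (by simpa using h), hp0 j]
  have h := sum_le_sum fun j (_ : j ∈ univ) => key j
  rw [sum_sub_distrib, ← mul_sum, sum_sub_distrib] at h
  simp only [sum_ite_mem, univ_inter, sum_const, nsmul_eq_mul, mul_one, hcard] at h
  nlinarith [hc m]

lemma exists_proj {d : ℕ} (ρ : Matrix (Fin d) (Fin d) ℂ) (h : ρ.IsHermitian) :
    ∃ P : Matrix (Fin d) (Fin d) ℂ, P * Pᴴ = P ∧ P * ρ = ρ ∧ P.trace = (ρ.rank : ℂ) := by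
  classical
  set U : Matrix (Fin d) (Fin d) ℂ := (h.eigenvectorUnitary : Matrix (Fin d) (Fin d) ℂ) with hU
  have hUU : Uᴴ * U = 1 := Unitary.coe_star_mul_self h.eigenvectorUnitary
  set E : Matrix (Fin d) (Fin d) ℂ :=
    Matrix.diagonal fun i => if h.eigenvalues i ≠ 0 then 1 else 0 with hE
  set D : Matrix (Fin d) (Fin d) ℂ := Matrix.diagonal fun i => (h.eigenvalues i : ℂ) with hD
  have hs : ρ = U * D * Uᴴ := by
    have := h.spectral_theorem
    rw [Unitary.conjStarAlgAut_apply] at this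
    exact this
  have hEE : E * E = E := by
    rw [hE, Matrix.diagonal_mul_diagonal]; congr 1; ext i; split_ifs <;> simp
  have hEH : Eᴴ = E := by
    rw [hE, Matrix.diagonal_conjTranspose]; congr 1; ext i
    simp only [Pi.star_apply]; split_ifs <;> simp
  have hED : E * D = D := by
    rw [hE, hD, Matrix.diagonal_mul_diagonal]; congr 1; ext i
    by_cases hi : h.eigenvalues i = 0 <;> simp [hi]
  refine ⟨U * E * Uᴴ, ?_, ?_, ?_⟩
  · rw [Matrix.conjTranspose_mul, Matrix.conjTranspose_mul, Matrix.conjTranspose_conjTranspose, hEH]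
    calc U * E * Uᴴ * (U * (E * Uᴴ)) = U * E * (Uᴴ * U) * E * Uᴴ := by
          simp only [Matrix.mul_assoc]
      _ = U * (E * E) * Uᴴ := by rw [hUU]; simp only [Matrix.mul_assoc, Matrix.mul_one, Matrix.one_mul]
      _ = _ := by rw [hEE]
  · calc U * E * Uᴴ * ρ = U * E * Uᴴ * (U * D * Uᴴ) := by rw [← hs]
      _ = U * E * (Uᴴ * U) * D * Uᴴ := by simp only [Matrix.mul_assoc]
      _ = U * (E * D) * Uᴴ := by rw [hUU]; simp only [Matrix.mul_assoc, Matrix.one_mul]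
      _ = ρ := by rw [hED, ← hs]
  · rw [Matrix.trace_mul_comm, ← Matrix.mul_assoc, hUU, Matrix.one_mul, hE, Matrix.trace_diagonal,
      h.rank_eq_card_non_zero_eigs, Fintype.card_subtype]
    rw [Finset.card_filter]
    push_cast
    rfl

lemma frob_expand {n d : ℕ} (A' : Matrix (Fin n) (Fin d) ℝ) (ξ : Fin n → ℝ)
    (ρ : Matrix (Fin d) (Fin d) ℂ) :
    frob (diagBlocks A' - tensorBlock ξ ρ) ^ 2 = ∑ i, ∑ j, A' i j ^ 2
      - 2 * ∑ j, (∑ i, ξ i * A' i j) * (ρ j j).re + (∑ i, ξ i ^ 2) * ∑ j, ∑ k, ‖ρ j k‖ ^ 2 := by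
  rw [frob, Real.sq_sqrt (by positivity), Fintype.sum_prod_type]
  have h1 : ∀ i j, ∑ k, ‖(diagBlocks A' - tensorBlock ξ ρ) (i, j) k‖ ^ 2 =
      A' i j ^ 2 - 2 * (ξ i * A' i j * (ρ j j).re) + ξ i ^ 2 * ∑ k, ‖ρ j k‖ ^ 2 := by
    intro i j
    have : ∀ k, ‖(diagBlocks A' - tensorBlock ξ ρ) (i, j) k‖ ^ 2 =
      (if j = k then A' i j ^ 2 - 2 * (ξ i * A' i j * (ρ j k).re) else 0) + ξ i ^ 2 * ‖ρ j k‖ ^ 2 := by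
      intro k
      simp only [diagBlocks, tensorBlock, Matrix.sub_apply, Matrix.of_apply, Complex.sq_norm,
        Complex.normSq_apply]
      split_ifs <;> simp <;> ring
    simp only [this, Finset.sum_add_distrib, Finset.mul_sum]
    simp
  simp only [h1, Finset.sum_add_distrib, Finset.sum_sub_distrib]
  congr 1
  · congr 1
    rw [Finset.sum_comm]
    simp only [Finset.mul_sum, Finset.sum_mul]
  · rw [Finset.sum_mul]
    simp only [Finset.mul_sum]

lemma frobR_expand {n d : ℕ} (A' : Matrix (Fin n) (Fin d) ℝ) (ξ : Fin n → ℝ)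
    (l : Fin d → ℝ) :
    frobR (A' - Matrix.vecMulVec ξ l) ^ 2 = ∑ i, ∑ j, A' i j ^ 2
      - 2 * ∑ j, (∑ i, ξ i * A' i j) * l j + (∑ i, ξ i ^ 2) * ∑ j, l j ^ 2 := by
  rw [frobR, Real.sq_sqrt (by positivity)]
  have h1 : ∀ i j, (A' - Matrix.vecMulVec ξ l) i j ^ 2 =
      A' i j ^ 2 - 2 * (ξ i * A' i j * l j) + ξ i ^ 2 * l j ^ 2 := by
    intro i j
    simp only [Matrix.sub_apply, Matrix.vecMulVec_apply]
    ring
  simp only [h1, Finset.sum_add_distrib, Finset.sum_sub_distrib]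
  congr 1
  · congr 1
    rw [Finset.sum_comm]
    simp only [Finset.mul_sum, Finset.sum_mul]
  · rw [Finset.sum_mul]
    simp only [Finset.mul_sum]

lemma diag_case {n d r : ℕ} (A' : Matrix (Fin n) (Fin d) ℝ) (ξ : Fin n → ℝ)
    (l : Fin d → ℝ) (hl : SparseVec r l) :
    ∃ ρ : Matrix (Fin d) (Fin d) ℂ, ρ.IsHermitian ∧ ρ.rank ≤ r ∧
      frobR (A' - Matrix.vecMulVec ξ l) ^ 2 = frob (diagBlocks A' - tensorBlock ξ ρ) ^ 2 := by
  classical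
  refine ⟨Matrix.diagonal fun j => (l j : ℂ), ?_, ?_, ?_⟩
  · rw [Matrix.IsHermitian, Matrix.diagonal_conjTranspose]; congr 1; ext i; simp
  · rw [Matrix.rank_diagonal]
    refine le_trans (le_of_eq ?_) hl
    rw [← Nat.card_coe_set_eq, Nat.card_eq_fintype_card]
    exact Fintype.card_congr (Equiv.subtypeEquivRight (by simp))
  · rw [frobR_expand, frob_expand]
    have : ∀ j, ∑ k, ‖(Matrix.diagonal fun j => (l j : ℂ)) j k‖ ^ 2 = l j ^ 2 := by
      intro j
      rw [Finset.sum_eq_single j]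
      · simp
      · intro k _ hk; simp [Matrix.diagonal_apply_ne' _ hk]
      · simp
    simp only [this]
    simp

lemma exists_better {n d r : ℕ} (A' : Matrix (Fin n) (Fin d) ℝ) (ξ : Fin n → ℝ)
    (ρ : Matrix (Fin d) (Fin d) ℂ) (h : ρ.IsHermitian) (hr : ρ.rank ≤ r) :
    ∃ l : Fin d → ℝ, SparseVec r l ∧
      frobR (A' - Matrix.vecMulVec ξ l) ^ 2 ≤ frob (diagBlocks A' - tensorBlock ξ ρ) ^ 2 := by
  classical
  simp only [frobR_expand, frob_expand]
  set b : Fin d → ℝ := fun j => ∑ i, ξ i * A' i j with hb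
  set N : ℝ := ∑ i, ξ i ^ 2 with hN
  have hN0 : 0 ≤ N := Finset.sum_nonneg fun i _ => sq_nonneg _
  rcases hN0.eq_or_lt with h0 | hpos
  · have hξ : ∀ i, ξ i = 0 := by
      intro i
      have := (Finset.sum_eq_zero_iff_of_nonneg (fun i _ => sq_nonneg (ξ i))).1 h0.symm i (by simp)
      simpa using this
    refine ⟨0, by simp [SparseVec], ?_⟩
    simp [← h0, hξ]
  obtain ⟨P, hPP, hPρ, htr⟩ := exists_proj ρ h
  set p : Fin d → ℝ := fun j => ∑ k, ‖P j k‖ ^ 2 with hp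
  have hpP : ∀ j, P j j = (p j : ℂ) := by
    intro j
    conv_lhs => rw [← hPP]
    rw [Matrix.mul_apply, hp]
    push_cast
    refine Finset.sum_congr rfl fun k _ => ?_
    rw [Matrix.conjTranspose_apply]
    exact Complex.mul_conj' _
  have hp0 : ∀ j, 0 ≤ p j := fun j => Finset.sum_nonneg fun i _ => sq_nonneg _
  have hp1 : ∀ j, p j ≤ 1 := by
    intro j
    have h1 : ‖P j j‖ ^ 2 ≤ p j :=
      Finset.single_le_sum (f := fun k => ‖P j k‖ ^ 2) (fun k _ => sq_nonneg _) (Finset.mem_univ j)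
    rw [hpP, Complex.norm_real, Real.norm_eq_abs, sq_abs] at h1
    nlinarith [hp0 j]
  have hps : ∑ j, p j ≤ r := by
    have : ((∑ j, p j : ℝ) : ℂ) = ((ρ.rank : ℝ) : ℂ) := by
      push_cast
      rw [← htr, Matrix.trace]
      exact Finset.sum_congr rfl fun j _ => (hpP j).symm
    rw [Complex.ofReal_injective this]
    exact_mod_cast hr
  obtain ⟨S, hS, hle⟩ := topsum r (fun j => b j ^ 2) p (fun j => sq_nonneg _) hp0 hp1 hps
  refine ⟨fun j => if j ∈ S then b j / N else 0, ?_, ?_⟩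
  · refine le_trans ?_ hS
    rw [← Set.ncard_coe_finset]
    refine Set.ncard_le_ncard ?_ (Finset.finite_toSet S)
    intro j hj
    by_contra hc
    exact hj (if_neg hc)
  have e : - (2 * ∑ j, b j * (if j ∈ S then b j / N else 0)) +
      N * ∑ j, (if j ∈ S then b j / N else 0) ^ 2 = - ((∑ j ∈ S, b j ^ 2) / N) := by
    rw [← Finset.sum_ite_mem_eq S, Finset.sum_div, Finset.mul_sum, Finset.mul_sum,
      ← Finset.sum_neg_distrib, ← Finset.sum_neg_distrib, ← Finset.sum_add_distrib]
    refine Finset.sum_congr rfl fun j _ => ?_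
    split_ifs
    · field_simp; ring
    · simp
  have key : ∀ j, 2 * (b j * (ρ j j).re) ≤ p j * b j ^ 2 / N + N * ∑ k, ‖ρ k j‖ ^ 2 := by
    intro j
    have h1 : (ρ j j).re = ∑ k, (P j k * ρ k j).re := by
      conv_lhs => rw [← hPρ, Matrix.mul_apply, Complex.re_sum]
    rw [h1, hp]
    simp only [Finset.sum_mul, Finset.mul_sum, Finset.sum_div]
    rw [← Finset.sum_add_distrib]
    refine Finset.sum_le_sum fun k _ => ?_
    have h2 : |(P j k * ρ k j).re| ≤ ‖P j k‖ * ‖ρ k j‖ := by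
      rw [← norm_mul]; exact Complex.abs_re_le_norm _
    have h3 : b j * (P j k * ρ k j).re ≤ |b j| * (‖P j k‖ * ‖ρ k j‖) := by
      refine (le_abs_self _).trans ?_
      rw [abs_mul]
      gcongr
    have h4 : ‖P j k‖ ^ 2 * b j ^ 2 / N + N * ‖ρ k j‖ ^ 2 - 2 * (|b j| * (‖P j k‖ * ‖ρ k j‖)) =
        (‖P j k‖ * |b j| - N * ‖ρ k j‖) ^ 2 / N := by
      rw [← sq_abs (b j)]
      field_simp
      ring
    have h5 : 0 ≤ (‖P j k‖ * |b j| - N * ‖ρ k j‖) ^ 2 / N := by positivity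
    linarith
  have hsum := Finset.sum_le_sum fun j (_ : j ∈ Finset.univ) => key j
  rw [Finset.sum_add_distrib, ← Finset.mul_sum, ← Finset.mul_sum, ← Finset.sum_div,
    Finset.sum_comm (f := fun j k => ‖ρ k j‖ ^ 2)] at hsum
  have hdiv : (∑ j, p j * b j ^ 2) / N ≤ (∑ j ∈ S, b j ^ 2) / N := by gcongr
  linarith

/-- **Key identity in the reduction of sparsePCA to the projection onto the
blind-tomography signal set.**
For `A' ∈ ℝ^{n×d}` with rows `A'₁, …, A'ₙ` and
`A = ∑ᵢ eᵢ ⊗ diag(A'ᵢ) ∈ ℂ^{nd×d}`, the minimum over `s`-sparse `ξ ∈ ℝⁿ` and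
Hermitian `ρ ∈ ℂ^{d×d}` of rank at most `r` of `‖A − ξ ⊗ ρ‖_F²` equals the
minimum over `s`-sparse `ξ ∈ ℝⁿ` and `r`-sparse `λ ∈ ℝ^d` of
`‖A' − ξ λᵀ‖_F²`. -/
theorem sparsePCA_reduction_identity
    (n d s r : ℕ) (A' : Matrix (Fin n) (Fin d) ℝ) :
    sInf {t : ℝ | ∃ ξ : Fin n → ℝ, ∃ ρ : Matrix (Fin d) (Fin d) ℂ,
        SparseVec s ξ ∧ ρ.IsHermitian ∧ ρ.rank ≤ r ∧
        t = frob (diagBlocks A' - tensorBlock ξ ρ) ^ 2} =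
    sInf {t : ℝ | ∃ ξ : Fin n → ℝ, ∃ lam : Fin d → ℝ,
        SparseVec s ξ ∧ SparseVec r lam ∧
        t = frobR (A' - Matrix.vecMulVec ξ lam) ^ 2} := by
  have hbd : ∀ T : Set ℝ, (∀ t ∈ T, 0 ≤ t) → BddBelow T := fun T h => ⟨0, fun t ht => h t ht⟩
  apply le_antisymm
  · apply le_csInf
    · exact ⟨_, 0, 0, by simp [SparseVec], by simp [SparseVec], rfl⟩
    · rintro t ⟨ξ, l, hξ, hl, rfl⟩
      obtain ⟨ρ, h1, h2, h3⟩ := diag_case A' ξ l hl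
      refine csInf_le (hbd _ ?_) ⟨ξ, ρ, hξ, h1, h2, h3⟩
      rintro t ⟨_, _, _, _, _, rfl⟩
      positivity
  · apply le_csInf
    · exact ⟨_, 0, 0, by simp [SparseVec], by simp, by simp, rfl⟩
    · rintro t ⟨ξ, ρ, hξ, h1, h2, rfl⟩
      obtain ⟨l, hl, hle⟩ := exists_better A' ξ ρ h1 h2
      refine csInf_le_of_le (hbd _ ?_) ⟨ξ, l, hξ, hl, rfl⟩ hle
      rintro t ⟨_, _, _, _, rfl⟩
      positivity
end
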